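/- For every x ∈ X, sup_{T∈𝒯} (lim_{n→∞} p_T^n(x)) = pup*(x), where pup* := lim_{n→∞} pup^n; that is, the upper hitting probability of the imprecise Markov chain equals the supremum, over all transition matrices compatible with 𝒯, of the hitting probabilities of the corresponding homogeneous Markov chains (the supremum need not be attained). -/

import Mathlib

open Filter Topology

variable {X : Type*}

/-- The application of a transition "matrix" `T` to an extended-real-valued
function `f`, `(Tf)(x) = ∑ y, T x y * f y`, with the convention `0 * ⊤ = 0`
(which is the convention of `EReal` multiplication). -/
noncomputable def matApply [Fintype X] (T : X → X → ℝ) (f : X → EReal) (x : X) : EReal :=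
  ∑ y, (T x y : EReal) * f y

/-- `T` is a transition matrix: nonnegative entries, rows summing to one. -/
def IsTransMat [Fintype X] (T : X → X → ℝ) : Prop :=
  (∀ x y, 0 ≤ T x y) ∧ ∀ x, ∑ y, T x y = 1

/-- `𝒯` has separately specified rows. -/
def HasSepRows [Fintype X] (𝒯 : Set (X → X → ℝ)) : Prop :=
  ∀ sel : X → X → X → ℝ, (∀ x, sel x ∈ 𝒯) → ∃ T ∈ 𝒯, ∀ x y, T x y = sel x x y

/-- The lower transition operator of `𝒯`. -/
noncomputable def lowerOp [Fintype X] (𝒯 : Set (X → X → ℝ)) (f : X → EReal) (x : X) : EReal :=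
  ⨅ T ∈ 𝒯, matApply T f x

/-- The upper transition operator of `𝒯`. -/
noncomputable def upperOp [Fintype X] (𝒯 : Set (X → X → ℝ)) (f : X → EReal) (x : X) : EReal :=
  ⨆ T ∈ 𝒯, matApply T f x

/-- The `{0,1}`-indicator of a set `B ⊆ X`, as a real-valued function. -/
noncomputable def indR (B : Set X) : X → ℝ := fun x => Set.indicator B 1 x

/-- The restriction of the lower transition operator to real-valued functions
(on which it is real-valued). -/
noncomputable def lowerOpR [Fintype X] (𝒯 : Set (X → X → ℝ)) (f : X → ℝ) (x : X) : ℝ :=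
  (lowerOp 𝒯 (fun y => (f y : EReal)) x).toReal

/-- The restriction of the upper transition operator to real-valued functions
(on which it is real-valued). -/
noncomputable def upperOpR [Fintype X] (𝒯 : Set (X → X → ℝ)) (f : X → ℝ) (x : X) : ℝ :=
  (upperOp 𝒯 (fun y => (f y : EReal)) x).toReal

/-- The lower hitting-probability iterates: `plow⁰ = 1_A`,
`plowⁿ⁺¹ = 1_A + 1_{Aᶜ} · (L plowⁿ)`. -/
noncomputable def plowIter [Fintype X] (𝒯 : Set (X → X → ℝ)) (A : Set X) : ℕ → X → ℝ
  | 0 => indR A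
  | n + 1 => fun x => indR A x + indR Aᶜ x * lowerOpR 𝒯 (plowIter 𝒯 A n) x

/-- The upper hitting-probability iterates: `pup⁰ = 1_A`,
`pupⁿ⁺¹ = 1_A + 1_{Aᶜ} · (U pupⁿ)`. -/
noncomputable def pupIter [Fintype X] (𝒯 : Set (X → X → ℝ)) (A : Set X) : ℕ → X → ℝ
  | 0 => indR A
  | n + 1 => fun x => indR A x + indR Aᶜ x * upperOpR 𝒯 (pupIter 𝒯 A n) x
/-- The hitting-probability iterates for a single (precise) transition matrix `T`:
`p_T⁰ = 1_A`, `p_Tⁿ⁺¹ = 1_A + 1_{Aᶜ} · (T p_Tⁿ)`; their pointwise limit is the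
probability of ever hitting `A` for the homogeneous Markov chain with matrix `T`. -/
noncomputable def pPrecIter [Fintype X] (T : X → X → ℝ) (A : Set X) : ℕ → X → ℝ
  | 0 => indR A
  | n + 1 => fun x => indR A x + indR Aᶜ x * ∑ y, T x y * pPrecIter T A n y

/-!
A matrix `T ∈ 𝒯` maximising each row sum `∑ y, T x y * p* y` against the upper hitting probability
`p*` may never reach `A`, so the supremum cannot be approached by approximating `U p* = p*` alone.
Discounting makes the inequality strict: for `0 < β < 1` the function `h = supₙ βⁿ pupⁿ` satisfies
`h ≤ β U h` off `A`, hence `h x < U h x` wherever `h x > 0`. Separately specified rows then provide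
one `T ∈ 𝒯` with `h x < (T h) x` at all these states, and the maximum principle for `T` bounds `h`
by the hitting probability of `T`. Letting `β → 1` recovers `pupⁿ`.
-/

section

section Real

lemma isLUB_toReal_of_isLUB_image_coe {s : Set ℝ} {a : EReal} (hs : s.Nonempty)
    (hbdd : BddAbove s) (ha : IsLUB (((↑) : ℝ → EReal) '' s) a) : IsLUB s a.toReal := by
  obtain ⟨r, hr⟩ := hs
  obtain ⟨b, hb⟩ := hbdd
  have a_ne_bot : a ≠ ⊥ :=
    ne_bot_of_le_ne_bot (EReal.coe_ne_bot r) (ha.1 (Set.mem_image_of_mem _ hr))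
  have a_ne_top : a ≠ ⊤ := by
    refine ne_top_of_le_ne_top (EReal.coe_ne_top b) (ha.2 ?_)
    rintro _ ⟨v, hv, rfl⟩
    exact EReal.coe_le_coe_iff.2 (hb hv)
  rw [← EReal.coe_toReal a_ne_top a_ne_bot] at ha
  exact .of_image EReal.coe_le_coe_iff ha

lemma le_of_forall_pow_mul_le {a b : ℝ} (n : ℕ)
    (h : ∀ β ∈ Set.Ioo (0 : ℝ) 1, β ^ n * a ≤ b) : a ≤ b := by
  have tendsto_pow_mul : Tendsto (fun β : ℝ => β ^ n * a) (𝓝[<] 1) (𝓝 a) := by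
    have : ContinuousAt (fun β : ℝ => β ^ n * a) 1 := by fun_prop
    simpa only [one_pow, one_mul] using this.tendsto.mono_left nhdsWithin_le_nhds
  exact le_of_tendsto tendsto_pow_mul
    (Filter.mem_of_superset (Ioo_mem_nhdsLT zero_lt_one) h)

end Real

variable [Fintype X]

section TransMat

variable {T : X → X → ℝ}

lemma matApply_coe (T : X → X → ℝ) (f : X → ℝ) (x : X) :
    matApply T (fun y => (f y : EReal)) x = ((∑ y, T x y * f y : ℝ) : EReal) := by
  simp only [matApply, ← EReal.coe_mul]
  exact (map_sum (⟨⟨(↑), EReal.coe_zero⟩, EReal.coe_add⟩ : ℝ →+ EReal) _ _).symm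

lemma IsTransMat.forall_mem_singleton (hT : IsTransMat T) :
    ∀ S ∈ ({T} : Set (X → X → ℝ)), IsTransMat S := by
  rintro _ rfl
  exact hT

lemma IsTransMat.sum_mul_mono (hT : IsTransMat T) {f g : X → ℝ} (hfg : f ≤ g) (x : X) :
    ∑ y, T x y * f y ≤ ∑ y, T x y * g y :=
  Finset.sum_le_sum fun y _ => mul_le_mul_of_nonneg_left (hfg y) (hT.1 x y)

lemma IsTransMat.sum_mul_const (hT : IsTransMat T) (c : ℝ) (x : X) : ∑ y, T x y * c = c := by
  rw [← Finset.sum_mul, hT.2 x, one_mul]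

lemma IsTransMat.sum_mul_le (hT : IsTransMat T) {f : X → ℝ} {c : ℝ} (hf : ∀ y, f y ≤ c) (x : X) :
    ∑ y, T x y * f y ≤ c :=
  (hT.sum_mul_mono hf x).trans_eq (hT.sum_mul_const c x)

lemma IsTransMat.nonpos_of_lt_sum_mul (hT : IsTransMat T) {d : X → ℝ}
    (hd : ∀ x, 0 < d x → d x < ∑ y, T x y * d y) (x : X) : d x ≤ 0 := by
  have : Nonempty X := ⟨x⟩
  obtain ⟨z, d_le_max⟩ := Finite.exists_max d
  have max_nonpos : d z ≤ 0 := by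
    by_contra! max_pos
    exact (hd z max_pos).not_ge (hT.sum_mul_le d_le_max z)
  exact (d_le_max x).trans max_nonpos

end TransMat

variable {𝒯 : Set (X → X → ℝ)} {A : Set X}

section UpperOp

lemma isLUB_upperOpR (hmem : ∀ T ∈ 𝒯, IsTransMat T) (hne : 𝒯.Nonempty) (f : X → ℝ) (x : X) :
    IsLUB ((fun T : X → X → ℝ => ∑ y, T x y * f y) '' 𝒯) (upperOpR 𝒯 f x) := by
  refine isLUB_toReal_of_isLUB_image_coe (hne.image _) ?_ ?_
  · obtain ⟨c, hc⟩ := Finite.bddAbove_range f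
    refine ⟨c, ?_⟩
    rintro _ ⟨T, hT, rfl⟩
    exact (hmem T hT).sum_mul_le (fun y => hc ⟨y, rfl⟩) x
  · simp only [upperOp, Set.image_image, ← matApply_coe]
    exact isLUB_biSup

lemma sum_mul_le_upperOpR (hmem : ∀ T ∈ 𝒯, IsTransMat T) {T : X → X → ℝ} (hT : T ∈ 𝒯)
    (f : X → ℝ) (x : X) : ∑ y, T x y * f y ≤ upperOpR 𝒯 f x :=
  (isLUB_upperOpR hmem ⟨T, hT⟩ f x).1 ⟨T, hT, rfl⟩

lemma upperOpR_singleton {T : X → X → ℝ} (f : X → ℝ) (x : X) :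
    upperOpR {T} f x = ∑ y, T x y * f y := by
  simp only [upperOpR, upperOp, iSup_singleton, matApply_coe, EReal.toReal_coe]

lemma upperOpR_mono (hmem : ∀ T ∈ 𝒯, IsTransMat T) (hne : 𝒯.Nonempty) {f g : X → ℝ}
    (hfg : f ≤ g) (x : X) : upperOpR 𝒯 f x ≤ upperOpR 𝒯 g x := by
  refine (isLUB_upperOpR hmem hne f x).2 ?_
  rintro _ ⟨T, hT, rfl⟩
  exact ((hmem T hT).sum_mul_mono hfg x).trans (sum_mul_le_upperOpR hmem hT g x)

lemma upperOpR_mono_set {𝒮 : Set (X → X → ℝ)} (hmem : ∀ T ∈ 𝒯, IsTransMat T) (hne : 𝒮.Nonempty)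
    (h𝒮 : 𝒮 ⊆ 𝒯) (f : X → ℝ) (x : X) : upperOpR 𝒮 f x ≤ upperOpR 𝒯 f x :=
  (isLUB_upperOpR (fun T hT => hmem T (h𝒮 hT)) hne f x).mono
    (isLUB_upperOpR hmem (hne.mono h𝒮) f x) (Set.image_mono h𝒮)

lemma upperOpR_const (hmem : ∀ T ∈ 𝒯, IsTransMat T) (hne : 𝒯.Nonempty) (c : ℝ) (x : X) :
    upperOpR 𝒯 (fun _ => c) x = c := by
  have image_eq : (fun T : X → X → ℝ => ∑ y, T x y * c) '' 𝒯 = {c} := by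
    rw [Set.image_congr fun T hT => (hmem T hT).sum_mul_const c x, hne.image_const]
  exact (image_eq ▸ isLUB_upperOpR hmem hne _ x).unique isLUB_singleton

lemma upperOpR_mem_Icc (hmem : ∀ T ∈ 𝒯, IsTransMat T) (hne : 𝒯.Nonempty) {f : X → ℝ} {a b : ℝ}
    (hf : ∀ y, f y ∈ Set.Icc a b) (x : X) : upperOpR 𝒯 f x ∈ Set.Icc a b :=
  ⟨(upperOpR_const hmem hne a x).ge.trans (upperOpR_mono hmem hne (fun y => (hf y).1) x),
    (upperOpR_mono hmem hne (fun y => (hf y).2) x).trans_eq (upperOpR_const hmem hne b x)⟩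

lemma upperOpR_const_mul (hmem : ∀ T ∈ 𝒯, IsTransMat T) (hne : 𝒯.Nonempty) {c : ℝ} (hc : 0 ≤ c)
    (f : X → ℝ) (x : X) : upperOpR 𝒯 (fun y => c * f y) x = c * upperOpR 𝒯 f x := by
  have isLUB_mul := (isLUB_upperOpR hmem hne f x).mul_left hc
  simp only [Set.image_image, Finset.mul_sum, mul_left_comm c] at isLUB_mul
  exact (isLUB_upperOpR hmem hne _ x).unique isLUB_mul

lemma HasSepRows.exists_forall_lt_sum_mul (hsep : HasSepRows 𝒯)
    (hmem : ∀ T ∈ 𝒯, IsTransMat T) (hne : 𝒯.Nonempty) (f g : X → ℝ) :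
    ∃ T ∈ 𝒯, ∀ x, g x < upperOpR 𝒯 f x → g x < ∑ y, T x y * f y := by
  have exists_row (x : X) : ∃ T ∈ 𝒯, g x < upperOpR 𝒯 f x → g x < ∑ y, T x y * f y := by
    by_cases hx : g x < upperOpR 𝒯 f x
    · obtain ⟨_, ⟨T, hT, rfl⟩, hlt⟩ := (lt_isLUB_iff (isLUB_upperOpR hmem hne f x)).1 hx
      exact ⟨T, hT, fun _ => hlt⟩
    · exact hne.imp fun T hT => ⟨hT, fun h => absurd h hx⟩
  choose row row_mem row_spec using exists_row
  obtain ⟨T, hT, T_eq⟩ := hsep row row_mem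
  exact ⟨T, hT, fun x hx => by simpa only [T_eq] using row_spec x hx⟩

end UpperOp

section Iterates

lemma pupIter_of_mem {x : X} (hx : x ∈ A) (n : ℕ) : pupIter 𝒯 A n x = 1 := by
  cases n <;> simp [pupIter, indR, hx]

lemma pupIter_zero_of_notMem {x : X} (hx : x ∉ A) : pupIter 𝒯 A 0 x = 0 := by
  simp [pupIter, indR, hx]

lemma pupIter_succ_of_notMem {x : X} (hx : x ∉ A) (n : ℕ) :
    pupIter 𝒯 A (n + 1) x = upperOpR 𝒯 (pupIter 𝒯 A n) x := by
  simp [pupIter, indR, hx]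

lemma pPrecIter_eq_pupIter_singleton (T : X → X → ℝ) (A : Set X) (n : ℕ) :
    pPrecIter T A n = pupIter {T} A n := by
  induction n with
  | zero => rfl
  | succ n ih => simp only [pPrecIter, pupIter, upperOpR_singleton, ih]

lemma pupIter_mem_Icc (hmem : ∀ T ∈ 𝒯, IsTransMat T) (hne : 𝒯.Nonempty) (A : Set X) (n : ℕ)
    (x : X) : pupIter 𝒯 A n x ∈ Set.Icc 0 1 := by
  induction n generalizing x with
  | zero =>
    by_cases hx : x ∈ A
    · simp [pupIter_of_mem hx]
    · simp [pupIter_zero_of_notMem hx]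
  | succ n ih =>
    by_cases hx : x ∈ A
    · simp [pupIter_of_mem hx]
    · rw [pupIter_succ_of_notMem hx]
      exact upperOpR_mem_Icc hmem hne ih x

lemma monotone_pupIter (hmem : ∀ T ∈ 𝒯, IsTransMat T) (hne : 𝒯.Nonempty) (A : Set X) :
    Monotone (pupIter 𝒯 A) := by
  refine monotone_nat_of_le_succ fun n => ?_
  induction n with
  | zero =>
    intro x
    by_cases hx : x ∈ A
    · rw [pupIter_of_mem hx, pupIter_of_mem hx]
    · rw [pupIter_zero_of_notMem hx]
      exact (pupIter_mem_Icc hmem hne A 1 x).1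
  | succ n ih =>
    intro x
    by_cases hx : x ∈ A
    · rw [pupIter_of_mem hx, pupIter_of_mem hx]
    · rw [pupIter_succ_of_notMem hx, pupIter_succ_of_notMem hx]
      exact upperOpR_mono hmem hne ih x

lemma pupIter_mono_set {𝒮 : Set (X → X → ℝ)} (hmem : ∀ T ∈ 𝒯, IsTransMat T) (hne : 𝒮.Nonempty)
    (h𝒮 : 𝒮 ⊆ 𝒯) (A : Set X) (n : ℕ) : pupIter 𝒮 A n ≤ pupIter 𝒯 A n := by
  induction n with
  | zero => exact le_rfl
  | succ n ih =>
    intro x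
    by_cases hx : x ∈ A
    · rw [pupIter_of_mem hx, pupIter_of_mem hx]
    · rw [pupIter_succ_of_notMem hx, pupIter_succ_of_notMem hx]
      exact (upperOpR_mono_set hmem hne h𝒮 _ x).trans
        (upperOpR_mono hmem (hne.mono h𝒮) ih x)

end Iterates

section HittingProb

/-- The upper hitting probability `pup* = limₙ pupⁿ` of `A`, encoded as the supremum of the
nondecreasing sequence of iterates. For `𝒯 = {T}` it is the hitting probability of the
homogeneous Markov chain with matrix `T`. -/
noncomputable def upperHittingProb (𝒯 : Set (X → X → ℝ)) (A : Set X) (x : X) : ℝ :=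
  ⨆ n, pupIter 𝒯 A n x

lemma bddAbove_range_pupIter (hmem : ∀ T ∈ 𝒯, IsTransMat T) (hne : 𝒯.Nonempty) (A : Set X)
    (x : X) : BddAbove (Set.range fun n => pupIter 𝒯 A n x) :=
  ⟨1, Set.forall_mem_range.2 fun n => (pupIter_mem_Icc hmem hne A n x).2⟩

lemma pupIter_le_upperHittingProb (hmem : ∀ T ∈ 𝒯, IsTransMat T) (hne : 𝒯.Nonempty) (A : Set X)
    (n : ℕ) (x : X) : pupIter 𝒯 A n x ≤ upperHittingProb 𝒯 A x :=
  le_ciSup (bddAbove_range_pupIter hmem hne A x) n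

lemma tendsto_pupIter (hmem : ∀ T ∈ 𝒯, IsTransMat T) (hne : 𝒯.Nonempty) (A : Set X) (x : X) :
    Tendsto (fun n => pupIter 𝒯 A n x) atTop (𝓝 (upperHittingProb 𝒯 A x)) :=
  tendsto_atTop_ciSup (fun _ _ hmn => monotone_pupIter hmem hne A hmn x)
    (bddAbove_range_pupIter hmem hne A x)

lemma IsTransMat.tendsto_pPrecIter {T : X → X → ℝ} (hT : IsTransMat T) (A : Set X) (x : X) :
    Tendsto (fun n => pPrecIter T A n x) atTop (𝓝 (upperHittingProb {T} A x)) := by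
  simpa only [pPrecIter_eq_pupIter_singleton] using
    tendsto_pupIter hT.forall_mem_singleton (Set.singleton_nonempty T) A x

lemma upperHittingProb_mono_set {𝒮 : Set (X → X → ℝ)} (hmem : ∀ T ∈ 𝒯, IsTransMat T)
    (hne : 𝒮.Nonempty) (h𝒮 : 𝒮 ⊆ 𝒯) (A : Set X) (x : X) :
    upperHittingProb 𝒮 A x ≤ upperHittingProb 𝒯 A x :=
  ciSup_mono (bddAbove_range_pupIter hmem (hne.mono h𝒮) A x)
    fun n => pupIter_mono_set hmem hne h𝒮 A n x

lemma upperHittingProb_of_mem {x : X} (hx : x ∈ A) : upperHittingProb 𝒯 A x = 1 := by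
  simp only [upperHittingProb, pupIter_of_mem hx, ciSup_const]

lemma upperHittingProb_nonneg (hmem : ∀ T ∈ 𝒯, IsTransMat T) (hne : 𝒯.Nonempty) (A : Set X)
    (x : X) : 0 ≤ upperHittingProb 𝒯 A x :=
  (pupIter_mem_Icc hmem hne A 0 x).1.trans (pupIter_le_upperHittingProb hmem hne A 0 x)

lemma sum_mul_upperHittingProb_le (hmem : ∀ T ∈ 𝒯, IsTransMat T) {T : X → X → ℝ} (hT : T ∈ 𝒯)
    {x : X} (hx : x ∉ A) : ∑ y, T x y * upperHittingProb 𝒯 A y ≤ upperHittingProb 𝒯 A x := by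
  have tendsto_sum : Tendsto (fun n => ∑ y, T x y * pupIter 𝒯 A n y) atTop
      (𝓝 (∑ y, T x y * upperHittingProb 𝒯 A y)) :=
    tendsto_finsetSum _ fun y _ => (tendsto_pupIter hmem ⟨T, hT⟩ A y).const_mul _
  refine le_of_tendsto' tendsto_sum fun n => ?_
  calc ∑ y, T x y * pupIter 𝒯 A n y
      ≤ upperOpR 𝒯 (pupIter 𝒯 A n) x := sum_mul_le_upperOpR hmem hT _ x
    _ = pupIter 𝒯 A (n + 1) x := (pupIter_succ_of_notMem hx n).symm
    _ ≤ upperHittingProb 𝒯 A x := pupIter_le_upperHittingProb hmem ⟨T, hT⟩ A (n + 1) x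

lemma le_upperHittingProb_of_lt_sum_mul (hmem : ∀ T ∈ 𝒯, IsTransMat T) {T : X → X → ℝ}
    (hT : T ∈ 𝒯) {h : X → ℝ} (hA : ∀ x ∈ A, h x ≤ 1)
    (hAc : ∀ x ∉ A, 0 < h x → h x < ∑ y, T x y * h y) (x : X) :
    h x ≤ upperHittingProb 𝒯 A x := by
  rw [← sub_nonpos]
  refine (hmem T hT).nonpos_of_lt_sum_mul
    (d := fun y => h y - upperHittingProb 𝒯 A y) (fun y diff_pos => ?_) x
  rw [sub_pos] at diff_pos
  have hy : y ∉ A := fun hy =>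
    diff_pos.not_ge ((hA y hy).trans_eq (upperHittingProb_of_mem hy).symm)
  have h_pos : 0 < h y := (upperHittingProb_nonneg hmem ⟨T, hT⟩ A y).trans_lt diff_pos
  simp only [mul_sub, Finset.sum_sub_distrib]
  linarith [hAc y hy h_pos, sum_mul_upperHittingProb_le hmem hT hy]

end HittingProb

section Discounted

/-- The discounted upper hitting probability `supₙ βⁿ pupⁿ`. The discount is applied to each
iterate instead of each step of the recursion, so it is bounded below by `βⁿ pupⁿ` by
construction while still satisfying `h ≤ β U h` off `A`. -/
noncomputable def discountedHittingProb (𝒯 : Set (X → X → ℝ)) (A : Set X) (β : ℝ) (x : X) : ℝ :=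
  ⨆ n, β ^ n * pupIter 𝒯 A n x

variable {β : ℝ}

lemma pow_mul_pupIter_mem_Icc (hmem : ∀ T ∈ 𝒯, IsTransMat T) (hne : 𝒯.Nonempty)
    (hβ : β ∈ Set.Icc 0 1) (A : Set X) (n : ℕ) (x : X) :
    β ^ n * pupIter 𝒯 A n x ∈ Set.Icc 0 1 :=
  unitInterval.mul_mem ⟨pow_nonneg hβ.1 n, pow_le_one₀ hβ.1 hβ.2⟩ (pupIter_mem_Icc hmem hne A n x)

lemma pow_mul_pupIter_le_discountedHittingProb (hmem : ∀ T ∈ 𝒯, IsTransMat T) (hne : 𝒯.Nonempty)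
    (hβ : β ∈ Set.Icc 0 1) (A : Set X) (n : ℕ) (x : X) :
    β ^ n * pupIter 𝒯 A n x ≤ discountedHittingProb 𝒯 A β x :=
  le_ciSup (f := fun n => β ^ n * pupIter 𝒯 A n x)
    ⟨1, Set.forall_mem_range.2 fun n => (pow_mul_pupIter_mem_Icc hmem hne hβ A n x).2⟩ n

lemma discountedHittingProb_mem_Icc (hmem : ∀ T ∈ 𝒯, IsTransMat T) (hne : 𝒯.Nonempty)
    (hβ : β ∈ Set.Icc 0 1) (A : Set X) (x : X) : discountedHittingProb 𝒯 A β x ∈ Set.Icc 0 1 :=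
  ⟨(pow_mul_pupIter_mem_Icc hmem hne hβ A 0 x).1.trans
      (pow_mul_pupIter_le_discountedHittingProb hmem hne hβ A 0 x),
    ciSup_le fun n => (pow_mul_pupIter_mem_Icc hmem hne hβ A n x).2⟩

lemma discountedHittingProb_le_mul_upperOpR (hmem : ∀ T ∈ 𝒯, IsTransMat T) (hne : 𝒯.Nonempty)
    (hβ : β ∈ Set.Icc 0 1) {x : X} (hx : x ∉ A) :
    discountedHittingProb 𝒯 A β x ≤ β * upperOpR 𝒯 (discountedHittingProb 𝒯 A β) x := by
  refine ciSup_le fun n => ?_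
  cases n with
  | zero =>
    rw [pupIter_zero_of_notMem hx, mul_zero]
    exact mul_nonneg hβ.1
      (upperOpR_mem_Icc hmem hne (discountedHittingProb_mem_Icc hmem hne hβ A) x).1
  | succ n =>
    calc β ^ (n + 1) * pupIter 𝒯 A (n + 1) x
        = β * upperOpR 𝒯 (fun y => β ^ n * pupIter 𝒯 A n y) x := by
          rw [pupIter_succ_of_notMem hx, upperOpR_const_mul hmem hne (pow_nonneg hβ.1 n),
            pow_succ', mul_assoc]
      _ ≤ β * upperOpR 𝒯 (discountedHittingProb 𝒯 A β) x :=
          mul_le_mul_of_nonneg_left (upperOpR_mono hmem hne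
            (pow_mul_pupIter_le_discountedHittingProb hmem hne hβ A n) x) hβ.1

lemma discountedHittingProb_lt_upperOpR (hmem : ∀ T ∈ 𝒯, IsTransMat T) (hne : 𝒯.Nonempty)
    (hβ : β ∈ Set.Ico 0 1) {x : X} (hx : x ∉ A) (hpos : 0 < discountedHittingProb 𝒯 A β x) :
    discountedHittingProb 𝒯 A β x < upperOpR 𝒯 (discountedHittingProb 𝒯 A β) x := by
  have le_mul := discountedHittingProb_le_mul_upperOpR hmem hne (Set.Ico_subset_Icc_self hβ) hx
  have upper_pos : 0 < upperOpR 𝒯 (discountedHittingProb 𝒯 A β) x :=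
    pos_of_mul_pos_right (hpos.trans_le le_mul) hβ.1
  exact le_mul.trans_lt (mul_lt_of_lt_one_left upper_pos hβ.2)

lemma HasSepRows.exists_discountedHittingProb_le (hsep : HasSepRows 𝒯)
    (hmem : ∀ T ∈ 𝒯, IsTransMat T) (hne : 𝒯.Nonempty) (hβ : β ∈ Set.Ico 0 1) (A : Set X) :
    ∃ T ∈ 𝒯, ∀ x, discountedHittingProb 𝒯 A β x ≤ upperHittingProb {T} A x := by
  obtain ⟨T, hT, T_spec⟩ := hsep.exists_forall_lt_sum_mul hmem hne
    (discountedHittingProb 𝒯 A β) (discountedHittingProb 𝒯 A β)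
  refine ⟨T, hT, le_upperHittingProb_of_lt_sum_mul (hmem T hT).forall_mem_singleton
    (Set.mem_singleton T) (fun x _ => ?_) fun x hx hpos => ?_⟩
  · exact (discountedHittingProb_mem_Icc hmem hne (Set.Ico_subset_Icc_self hβ) A x).2
  · exact T_spec x (discountedHittingProb_lt_upperOpR hmem hne hβ hx hpos)

end Discounted

lemma HasSepRows.isLUB_upperHittingProb (hsep : HasSepRows 𝒯) (hmem : ∀ T ∈ 𝒯, IsTransMat T)
    (hne : 𝒯.Nonempty) (A : Set X) (x : X) :
    IsLUB ((fun T => upperHittingProb {T} A x) '' 𝒯) (upperHittingProb 𝒯 A x) := by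
  refine ⟨?_, fun b hb => ciSup_le fun n => le_of_forall_pow_mul_le n fun β hβ => ?_⟩
  · rintro _ ⟨T, hT, rfl⟩
    exact upperHittingProb_mono_set hmem (Set.singleton_nonempty T)
      (Set.singleton_subset_iff.2 hT) A x
  · obtain ⟨T, hT, discounted_le⟩ :=
      hsep.exists_discountedHittingProb_le hmem hne (Set.Ioo_subset_Ico_self hβ) A
    calc β ^ n * pupIter 𝒯 A n x
        ≤ discountedHittingProb 𝒯 A β x :=
          pow_mul_pupIter_le_discountedHittingProb hmem hne (Set.Ioo_subset_Icc_self hβ) A n x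
      _ ≤ upperHittingProb {T} A x := discounted_le x
      _ ≤ b := hb ⟨T, hT, rfl⟩

theorem upper_hitting_prob_is_sup_general (hmem : ∀ T ∈ 𝒯, IsTransMat T) (hne : 𝒯.Nonempty)
    (hsep : HasSepRows 𝒯) (A : Set X) :
    ∃ pupStar : X → ℝ,
      (∀ x, Tendsto (fun n => pupIter 𝒯 A n x) atTop (𝓝 (pupStar x))) ∧
      ∀ x, IsLUB {v : ℝ | ∃ T ∈ 𝒯,
        Tendsto (fun n => pPrecIter T A n x) atTop (𝓝 v)} (pupStar x) := by
  refine ⟨upperHittingProb 𝒯 A, tendsto_pupIter hmem hne A, fun x => ?_⟩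
  have limits_eq_image : {v : ℝ | ∃ T ∈ 𝒯, Tendsto (fun n => pPrecIter T A n x) atTop (𝓝 v)} =
      (fun T => upperHittingProb {T} A x) '' 𝒯 := by
    ext v
    refine exists_congr fun T => and_congr_right fun hT => ?_
    have tendsto_hittingProb := (hmem T hT).tendsto_pPrecIter A x
    exact ⟨tendsto_nhds_unique tendsto_hittingProb, fun hv => hv ▸ tendsto_hittingProb⟩
  exact limits_eq_image ▸ hsep.isLUB_upperHittingProb hmem hne A x

end

/-- The upper hitting probability of the imprecise Markov chain equals, at every state,
the supremum over all compatible transition matrices of the hitting probabilities of the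
corresponding homogeneous Markov chains (the supremum need not be attained). -/
theorem upper_hitting_prob_is_sup [Fintype X] [Nonempty X]
    (𝒯 : Set (X → X → ℝ))
    (hmem : ∀ T ∈ 𝒯, IsTransMat T) (hne : 𝒯.Nonempty) (hcl : IsClosed 𝒯)
    (hcv : Convex ℝ 𝒯) (hsep : HasSepRows 𝒯) (A : Set X) :
    ∃ pupStar : X → ℝ,
      (∀ x, Tendsto (fun n => pupIter 𝒯 A n x) atTop (𝓝 (pupStar x))) ∧
      ∀ x, IsLUB {v : ℝ | ∃ T ∈ 𝒯,
        Tendsto (fun n => pPrecIter T A n x) atTop (𝓝 v)} (pupStar x) :=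
  upper_hitting_prob_is_sup_general hmem hne hsep A
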